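/- Proposition 3 (MMF-DoF of rate-splitting beamforming): Suppose M ≥ 1, N ≥ 1, σ² > 0, and the generic rank assumption holds. Define M_D* := M if N ≥ N_M, and otherwise M_D* := the unique L ∈ {1,…,M−1} with N_L ≤ N < N_{L+1}. Then lim_{P→∞} ℛ_RS(P)/log₂(P) = 1/(1 + M − M_D*). -/

import Mathlib

/-! The multiplexing gain of rate splitting is found by matching two bounds on the max-min rate `r`,
both equal to `log₂ P / (1 + M - L) + O(1)` with `L = M_D*`.

Achievability (`achievable`). Because `N_L ≤ N`, genericity lets the designated beams of the `L`
smallest groups be zero-forced against one another (`exists_zero_forcing`). They get power of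
order `P ^ a`, `a = 1 / (1 + M - L)`, hence rate `a log₂ P`. The degraded stream sees them as
noise and carries `(1 - a) log₂ P = (M - L) a log₂ P`, split evenly among the other groups.

Converse (`converse_bound`). Group `m` must collect `β m = r - C m ≤ r` from its designated
stream. The received power bounds `∑ C + log₂ (designated power + σ²)` at each user by
`log₂ P + O(1)`. Since `N < N_{L+1}`, among any `L + 1` groups the beam of the smallest one cannot
be nulled at the users of the others (`exists_interference`, `exists_erase_users`). Call `β m`
large if it exceeds a fixed constant.
* If at least `L + 2` groups had large `β`, their strongest beam would interfere with one of the
  other groups at a level comparable to that group's own signal: a contradiction.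
* If exactly `L + 1` groups have large `β`, the beam of one of them hits another, and the two rates
  together are at most `log₂` of the designated power received by a user of the latter.
* Otherwise a single large rate is compared with the received power.

In each case all but `L - 1` of the large `β` are absorbed by the received power, and summing
`r = C m + β m` over `m` gives `(1 + M - L) r ≤ log₂ P + O(1)` (`converse_count`). When `L = M`
the cases with more than `L` groups do not occur.
-/

open scoped BigOperators

noncomputable section

/-- `hᴴ p`. -/
def hinner {N : ℕ} (h p : Fin N → ℂ) : ℂ := ∑ i, star (h i) * p i

/-- Transmit power of a beamformer. -/
def bpow {N : ℕ} (p : Fin N → ℂ) : ℝ := ∑ i, ‖p i‖ ^ 2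

/-- Generic rank assumption. -/
def GenericRank {N K : ℕ} (h : Fin K → Fin N → ℂ) : Prop :=
  ∀ S : Finset (Fin K),
    (Matrix.of fun (i : Fin N) (k : S) => h k.1 i).rank = min N S.card

/-- Size of group `m` (groups indexed from `0`). -/
def Gsize {K M : ℕ} (μ : Fin K → Fin M) (m : ℕ) : ℕ :=
  (Finset.univ.filter fun k => (μ k : ℕ) = m).card

/-- `N_L = 1 + Σ_{m=2}^{L} G_m` (`1`-indexed), i.e. `1 + Σ_{m=1}^{L-1} G_m` with our
`0`-indexed groups. -/
def NL {K M : ℕ} (μ : Fin K → Fin M) (L : ℕ) : ℕ :=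
  1 + ∑ m ∈ Finset.Ico 1 L, Gsize μ m

/-- Rate of user `k` under classical (designated) beamforming `p`. -/
def userRate {N K M : ℕ} (h : Fin K → Fin N → ℂ) (μ : Fin K → Fin M)
    (σ2 : ℝ) (p : Fin M → Fin N → ℂ) (k : Fin K) : ℝ :=
  Real.logb 2 (1 + ‖hinner (h k) (p (μ k))‖ ^ 2 /
    ((∑ m ∈ Finset.univ.erase (μ k), ‖hinner (h k) (p m)‖ ^ 2) + σ2))

/-- Max-min fair value of rate-splitting (RS) beamforming: the supremum over degraded rate
shares `C_m ≥ 0`, a degraded beamformer `p_c` and designated beamformers `p_1,…,p_M`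
satisfying the total power constraint and the decodability constraint of the degraded
stream at every user, of `min_m (C_m + min_{i ∈ 𝒢_m} R_i)`. -/
def MMFRS {N K M : ℕ} (h : Fin K → Fin N → ℂ) (μ : Fin K → Fin M)
    (σ2 : ℝ) (P : ℝ) : ℝ :=
  sSup { r : ℝ | ∃ (C : Fin M → ℝ) (pc : Fin N → ℂ) (p : Fin M → Fin N → ℂ),
    (∀ m, 0 ≤ C m) ∧
    bpow pc + (∑ m, bpow (p m)) ≤ P ∧
    (∀ k : Fin K, (∑ m, C m) ≤ Real.logb 2 (1 + ‖hinner (h k) pc‖ ^ 2 /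
        ((∑ j, ‖hinner (h k) (p j)‖ ^ 2) + σ2))) ∧
    r = ⨅ m : Fin M, (C m + ⨅ i : {i : Fin K // μ i = m}, userRate h μ σ2 p i.1) }

/-! ### Linear algebra of generic channels -/

/-- The linear form `q ↦ gᴴ q`. -/
def hform {N : ℕ} (g : Fin N → ℂ) : Module.Dual ℂ (Fin N → ℂ) where
  toFun q := hinner g q
  map_add' x y := by simp [hinner, mul_add, Finset.sum_add_distrib]
  map_smul' c x := by
    simp only [hinner, Pi.smul_apply, smul_eq_mul, RingHom.id_apply, Finset.mul_sum]
    exact Finset.sum_congr rfl fun i _ => by ring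

lemma hinner_smul {N : ℕ} (g q : Fin N → ℂ) (c : ℂ) : hinner g (c • q) = c * hinner g q :=
  (hform g).map_smul c q

lemma hinner_zero {N : ℕ} (g : Fin N → ℂ) : hinner g 0 = 0 := (hform g).map_zero

lemma bpow_nonneg {N : ℕ} (q : Fin N → ℂ) : 0 ≤ bpow q :=
  Finset.sum_nonneg fun _ _ => by positivity

lemma bpow_smul {N : ℕ} (q : Fin N → ℂ) (c : ℂ) : bpow (c • q) = ‖c‖ ^ 2 * bpow q := by
  simp [bpow, mul_pow, Finset.mul_sum]

lemma hinner_sq_le {N : ℕ} (g q : Fin N → ℂ) : ‖hinner g q‖ ^ 2 ≤ bpow g * bpow q := by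
  have h1 : ‖hinner g q‖ ≤ ∑ i, ‖g i‖ * ‖q i‖ :=
    (norm_sum_le _ _).trans_eq (Finset.sum_congr rfl fun i _ => by simp)
  calc ‖hinner g q‖ ^ 2 ≤ (∑ i, ‖g i‖ * ‖q i‖) ^ 2 := by gcongr
    _ ≤ bpow g * bpow q := Finset.sum_mul_sq_le_sq_mul_sq _ _ _

/-- The channel matrix of the users in `S`, acting on transmit vectors. -/
def chanMap {N K : ℕ} (h : Fin K → Fin N → ℂ) (S : Finset (Fin K)) :
    (Fin N → ℂ) →ₗ[ℂ] (S → ℂ) :=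
  LinearMap.pi fun k => hform (h k.1)

open ComplexOrder in
lemma finrank_range_chanMap {N K : ℕ} {h : Fin K → Fin N → ℂ} (hrank : GenericRank h)
    (S : Finset (Fin K)) :
    Module.finrank ℂ (LinearMap.range (chanMap h S)) = min N S.card := by
  have e : chanMap h S =
      (Matrix.conjTranspose (Matrix.of fun (i : Fin N) (k : S) => h k.1 i)).mulVecLin := by
    ext q k
    simp [chanMap, hform, hinner, Matrix.mulVec, dotProduct, Matrix.conjTranspose_apply]
  rw [e, ← hrank S, ← Matrix.rank_conjTranspose]
  rfl

lemma chanMap_surjective {N K : ℕ} {h : Fin K → Fin N → ℂ} (hrank : GenericRank h)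
    {S : Finset (Fin K)} (hS : S.card ≤ N) : Function.Surjective (chanMap h S) := by
  rw [← LinearMap.range_eq_top]
  apply Submodule.eq_top_of_finrank_eq
  rw [finrank_range_chanMap hrank, min_eq_right hS]
  simp

lemma chanMap_injective {N K : ℕ} {h : Fin K → Fin N → ℂ} (hrank : GenericRank h)
    {S : Finset (Fin K)} (hS : N ≤ S.card) : Function.Injective (chanMap h S) := by
  rw [← LinearMap.ker_eq_bot, ← Submodule.finrank_eq_zero (R := ℂ)]
  have := LinearMap.finrank_range_add_finrank_ker (chanMap h S)
  rw [finrank_range_chanMap hrank, min_eq_left hS] at this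
  simp at this
  simpa using this

/-- Zero forcing: fewer than `N` users can be nulled while every other user still receives a
nonzero signal. -/
lemma exists_zero_forcing {N K : ℕ} {h : Fin K → Fin N → ℂ} (hrank : GenericRank h)
    {Z : Finset (Fin K)} (hZ : Z.card + 1 ≤ N) :
    ∃ q : Fin N → ℂ, (∀ k ∈ Z, hinner (h k) q = 0) ∧ ∀ k ∉ Z, hinner (h k) q ≠ 0 := by
  obtain ⟨q, hq, hne⟩ := Module.Dual.exists_forall_mem_ne_zero_of_forall_exists
    (LinearMap.ker (chanMap h Z)) (fun k : {k // k ∉ Z} => hform (h k.1)) (by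
      rintro ⟨k, hk⟩
      obtain ⟨q, hq⟩ := chanMap_surjective hrank (S := insert k Z)
        (by rwa [Finset.card_insert_of_notMem hk]) (fun j => if j.1 = k then 1 else 0)
      refine ⟨q, ?_, ?_⟩
      · rw [LinearMap.mem_ker]
        ext j
        have := congrFun hq ⟨j.1, Finset.mem_insert_of_mem j.2⟩
        rw [if_neg (fun e : j.1 = k => hk (e ▸ j.2))] at this
        exact this
      · have := congrFun hq ⟨k, Finset.mem_insert_self k Z⟩
        rw [if_pos rfl] at this
        change hinner (h k) q = 1 at this
        change hinner (h k) q ≠ 0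
        simp [this])
  exact ⟨q, fun k hk => congrFun hq ⟨k, hk⟩, fun k hk => hne ⟨k, hk⟩⟩

/-- A set of at least `N` users cannot be nulled: some user of the set receives a fixed fraction
of the transmit power. -/
lemma exists_interference {N K : ℕ} (hN : 1 ≤ N) {h : Fin K → Fin N → ℂ}
    (hrank : GenericRank h) : ∃ c : ℝ, 0 < c ∧ c ≤ 1 ∧ ∀ S : Finset (Fin K), N ≤ S.card →
      ∀ q : Fin N → ℂ, ∃ k ∈ S, c * bpow q ≤ ‖hinner (h k) q‖ ^ 2 := by
  have key : ∀ S : Finset (Fin K), ∃ c : ℝ, 0 < c ∧ (N ≤ S.card →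
      ∀ q : Fin N → ℂ, ∃ k ∈ S, c * bpow q ≤ ‖hinner (h k) q‖ ^ 2) := by
    intro S
    by_cases hS : N ≤ S.card
    · obtain ⟨a, ha, hl⟩ := LinearMap.exists_antilipschitzWith (chanMap h S)
        (LinearMap.ker_eq_bot.2 (chanMap_injective hrank hS))
      have hNa : (0 : ℝ) < N * (a : ℝ) ^ 2 := by
        have : (0 : ℝ) < a := by exact_mod_cast ha
        have : (0 : ℝ) < N := by exact_mod_cast hN
        positivity
      refine ⟨1 / (N * (a : ℝ) ^ 2), by positivity, fun _ q => ?_⟩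
      have hSne : Nonempty S := by
        obtain ⟨k, hk⟩ := Finset.card_pos.1 (lt_of_lt_of_le hN hS)
        exact ⟨⟨k, hk⟩⟩
      obtain ⟨k, hk⟩ := Finite.exists_max (fun k : S => ‖chanMap h S q k‖)
      refine ⟨k.1, k.2, ?_⟩
      have h1 : ‖q‖ ≤ a * ‖chanMap h S q‖ := by
        simpa using hl.le_mul_dist q 0
      have h2 : ‖chanMap h S q‖ ≤ ‖hinner (h k.1) q‖ :=
        (pi_norm_le_iff_of_nonneg (norm_nonneg _)).2 hk
      have h3 : bpow q ≤ N * ‖q‖ ^ 2 := by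
        calc bpow q ≤ ∑ _i : Fin N, ‖q‖ ^ 2 := by
              apply Finset.sum_le_sum
              intro i _
              gcongr
              exact norm_le_pi_norm q i
          _ = N * ‖q‖ ^ 2 := by simp
      have h4 : ‖q‖ ≤ a * ‖hinner (h k.1) q‖ := h1.trans (by gcongr)
      rw [one_div_mul_eq_div, div_le_iff₀ hNa]
      calc bpow q ≤ N * ‖q‖ ^ 2 := h3
        _ ≤ N * (a * ‖hinner (h k.1) q‖) ^ 2 := by gcongr
        _ = _ := by ring
    · exact ⟨1, one_pos, fun h => absurd h hS⟩
  choose c hc hc2 using key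
  obtain ⟨S₀, hS₀⟩ := Finite.exists_min c
  refine ⟨min (c S₀) 1, lt_min (hc _) one_pos, min_le_right _ _, fun S hS q => ?_⟩
  obtain ⟨k, hk, hle⟩ := hc2 S hS q
  refine ⟨k, hk, le_trans ?_ hle⟩
  have := bpow_nonneg q
  gcongr
  exact (min_le_left _ _).trans (hS₀ S)

/-! ### Group sizes -/

/-- Sizes are nondecreasing in the index, so any `n` groups with nonzero index hold at least as
many users as the groups `1, …, n`. -/
lemma sum_Ico_le_sum {M : ℕ} {g : ℕ → ℕ}
    (hord : ∀ m m' : ℕ, m ≤ m' → m' < M → g m ≤ g m') (n : ℕ) :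
    ∀ S : Finset ℕ, (∀ m ∈ S, 1 ≤ m ∧ m < M) → n ≤ S.card →
      ∑ m ∈ Finset.Ico 1 (n + 1), g m ≤ ∑ m ∈ S, g m := by
  induction n with
  | zero => intro S _ _; simp
  | succ n ih =>
    intro S hS hn
    have hne : S.Nonempty := Finset.card_pos.1 (by omega)
    have hmem := S.max'_mem hne
    set a := S.max' hne with ha
    have hcard : S.card ≤ a := by
      have hsub : S ⊆ Finset.Ico 1 (a + 1) := fun m hm =>
        Finset.mem_Ico.2 ⟨(hS m hm).1, Nat.lt_succ_of_le (S.le_max' m hm)⟩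
      simpa using Finset.card_le_card hsub
    have h1 := ih (S.erase a) (fun m hm => hS m (Finset.mem_of_mem_erase hm))
      (by rw [Finset.card_erase_of_mem hmem]; omega)
    have h2 := hord (n + 1) a (by omega) (hS a hmem).2
    rw [Finset.sum_Ico_succ_top (by omega), ← Finset.sum_erase_add S g hmem]
    omega

/-- The number of users in a family of groups. -/
lemma card_users {K M : ℕ} (μ : Fin K → Fin M) (T : Finset (Fin M)) :
    (Finset.univ.filter fun k => μ k ∈ T).card = ∑ m ∈ T, Gsize μ m := by
  rw [Finset.card_eq_sum_card_fiberwise (f := μ) (t := T) (fun k hk => by simpa using hk)]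
  refine Finset.sum_congr rfl fun m hm => ?_
  unfold Gsize
  congr 1
  ext k
  simp only [Finset.mem_filter, Finset.mem_univ, true_and, Fin.ext_iff]
  constructor
  · exact fun hk => hk.2
  · exact fun hk => ⟨(Fin.ext hk : μ k = m) ▸ hm, hk⟩

/-- In any family of at least `L + 1` groups, the groups other than the one of smallest index hold
at least `N_{L+1} - 1 ≥ N` users. -/
lemma exists_erase_users {K M L N : ℕ} (μ : Fin K → Fin M)
    (hord : ∀ m m' : ℕ, m ≤ m' → m' < M → Gsize μ m ≤ Gsize μ m')
    (hlt : N < NL μ (L + 1)) (T : Finset (Fin M)) (hT : L + 1 ≤ T.card) :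
    ∃ m ∈ T, N ≤ (Finset.univ.filter fun k => μ k ∈ T.erase m).card := by
  have hne : T.Nonempty := Finset.card_pos.1 (by omega)
  refine ⟨T.min' hne, T.min'_mem hne, ?_⟩
  rw [card_users]
  have := sum_Ico_le_sum hord L ((T.erase (T.min' hne)).map Fin.valEmbedding) (by
    intro m hm
    obtain ⟨a, ha, rfl⟩ := Finset.mem_map.1 hm
    have h1 : T.min' hne < a :=
      lt_of_le_of_ne (T.min'_le a (Finset.mem_of_mem_erase ha)) (Finset.ne_of_mem_erase ha).symm
    have h2 := Fin.lt_def.1 h1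
    simp only [Fin.valEmbedding_apply]
    exact ⟨by omega, a.2⟩) (by
    rw [Finset.card_map, Finset.card_erase_of_mem (T.min'_mem hne)]; omega)
  rw [Finset.sum_map] at this
  unfold NL at hlt
  simp only [Fin.valEmbedding_apply] at this
  omega

/-- The users of the first `L` groups other than group `m` number at most `N_L - 1`. -/
lemma card_others {K M L N : ℕ} (μ : Fin K → Fin M)
    (hord : ∀ m m' : ℕ, m ≤ m' → m' < M → Gsize μ m ≤ Gsize μ m')
    (hle : NL μ L ≤ N) (hLM : L ≤ M) (m : Fin M) (hm : (m : ℕ) < L) :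
    (Finset.univ.filter fun k => (μ k : ℕ) < L ∧ μ k ≠ m).card + 1 ≤ N := by
  have h1 : (Finset.univ.filter fun k => (μ k : ℕ) < L ∧ μ k ≠ m) =
      Finset.univ.filter fun k =>
        μ k ∈ (Finset.univ.filter fun j : Fin M => (j : ℕ) < L).erase m := by
    ext k; simp [and_comm]
  have h2 : ∑ j ∈ (Finset.univ.filter fun j : Fin M => (j : ℕ) < L), Gsize μ j
      = ∑ j ∈ Finset.range L, Gsize μ j := by
    have : Finset.range L = (Finset.univ.filter fun j : Fin M => (j : ℕ) < L).map
        Fin.valEmbedding := by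
      ext j
      simp only [Finset.mem_range, Finset.mem_map, Finset.mem_filter, Finset.mem_univ, true_and,
        Fin.valEmbedding_apply]
      exact ⟨fun hj => ⟨⟨j, by omega⟩, hj, rfl⟩, by rintro ⟨a, ha, rfl⟩; exact ha⟩
    rw [this, Finset.sum_map]
    rfl
  have h3 := Finset.sum_erase_add (Finset.univ.filter fun j : Fin M => (j : ℕ) < L)
    (fun j => Gsize μ j) (a := m) (by simp [hm])
  have h4 : ∑ j ∈ Finset.range L, Gsize μ j = Gsize μ 0 + ∑ j ∈ Finset.Ico 1 L, Gsize μ j := by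
    rw [Finset.range_eq_Ico, Finset.sum_eq_sum_Ico_succ_bot (by omega)]
  have h5 := hord 0 m (by omega) m.2
  rw [h1, card_users]
  unfold NL at hle
  omega

/-! ### Converse -/

/-- The counting step of the converse. Here `β m = r - C m` is the rate group `m` has to collect
from its designated stream and `c₀` separates negligible rates from the others. -/
lemma converse_count {M L : ℕ} (hL1 : 1 ≤ L) {r c₀ Q A : ℝ} {β : Fin M → ℝ}
    (hr : 0 ≤ r) (hc₀ : 0 ≤ c₀) (hβ : ∀ m, β m ≤ r) (hA : ∑ m, (r - β m) = A) (h0 : A ≤ Q)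
    (h1 : ∀ m, β m + A ≤ Q)
    (h2 : ∀ T : Finset (Fin M), (∀ m ∈ T, c₀ < β m) → L + 1 ≤ T.card →
      T.card = L + 1 ∧ ∃ i ∈ T, ∃ j ∈ T, i ≠ j ∧ β i + β j + A ≤ Q) :
    r * (1 + (M : ℝ) - L) ≤ Q + M * c₀ := by
  set T := Finset.univ.filter fun m => c₀ < β m with hT
  have hTm : ∀ m ∈ T, c₀ < β m := fun m hm => (Finset.mem_filter.1 hm).2
  have hsum : M * r - ∑ m, β m = A := by
    rw [← hA, Finset.sum_sub_distrib]; simp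
  have hsplit : ∑ m, β m ≤ ∑ m ∈ T, β m + M * c₀ := by
    rw [← Finset.sum_filter_add_sum_filter_not Finset.univ (fun m => c₀ < β m)]
    gcongr
    calc ∑ m ∈ Finset.univ.filter (fun m => ¬ c₀ < β m), β m
        ≤ (Finset.univ.filter (fun m => ¬ c₀ < β m)).card • c₀ :=
          Finset.sum_le_card_nsmul _ _ _ fun m hm => not_lt.1 (Finset.mem_filter.1 hm).2
      _ ≤ M * c₀ := by
          rw [nsmul_eq_mul]
          gcongr
          exact_mod_cast (Finset.card_le_univ _).trans_eq (Fintype.card_fin M)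
  have hL1' : (1 : ℝ) ≤ L := by exact_mod_cast hL1
  have hbd : ∀ U : Finset (Fin M), U.card + 1 ≤ L → ∑ m ∈ U, β m ≤ (L - 1) * r := by
    intro U hU
    calc ∑ m ∈ U, β m ≤ U.card • r := Finset.sum_le_card_nsmul _ _ _ fun m _ => hβ m
      _ ≤ (L - 1) * r := by
          rw [nsmul_eq_mul]
          gcongr
          have : ((U.card + 1 : ℕ) : ℝ) ≤ L := by exact_mod_cast hU
          push_cast at this
          linarith
  by_cases hcard : L + 1 ≤ T.card
  · obtain ⟨hc, i, hi, j, hj, hij, hle⟩ := h2 T hTm hcard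
    have hj' : j ∈ T.erase i := Finset.mem_erase.2 ⟨hij.symm, hj⟩
    have e1 := Finset.sum_erase_add T β hi
    have e2 := Finset.sum_erase_add (T.erase i) β hj'
    have := hbd ((T.erase i).erase j) (by
      rw [Finset.card_erase_of_mem hj', Finset.card_erase_of_mem hi]; omega)
    nlinarith
  · rcases T.eq_empty_or_nonempty with he | ⟨i, hi⟩
    · rw [he] at hsplit
      simp only [Finset.sum_empty, zero_add] at hsplit
      nlinarith
    · have e1 := Finset.sum_erase_add T β hi
      have := hbd (T.erase i) (by rw [Finset.card_erase_of_mem hi]; omega)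
      have := h1 i
      nlinarith

lemma logb_one_add_div {x y : ℝ} (hx : 0 ≤ x) (hy : 0 < y) :
    Real.logb 2 (1 + x / y) = Real.logb 2 (x + y) - Real.logb 2 y := by
  rw [← Real.logb_div (by positivity) hy.ne']
  congr 1
  field_simp
  ring

/-- Every achievable rate is at most `(log₂ P + O(1)) / (1 + M - L)`, provided that among any
`L + 1` groups some beam cannot be nulled at the users of the other groups. -/
lemma converse_bound {N K M L : ℕ} (hM : 1 ≤ M) (hN : 1 ≤ N)
    (h : Fin K → Fin N → ℂ) (μ : Fin K → Fin M) (hsurj : Function.Surjective μ)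
    (hrank : GenericRank h) (σ2 : ℝ) (hσ : 0 < σ2) (hL1 : 1 ≤ L)
    (hsel : ∀ T : Finset (Fin M), L + 1 ≤ T.card →
      ∃ m ∈ T, N ≤ (Finset.univ.filter fun k => μ k ∈ T.erase m).card) :
    ∃ D : ℝ, ∀ P : ℝ, 1 ≤ P → ∀ (C : Fin M → ℝ) (pc : Fin N → ℂ) (p : Fin M → Fin N → ℂ),
      (∀ m, 0 ≤ C m) → bpow pc + (∑ m, bpow (p m)) ≤ P →
      (∀ k : Fin K, (∑ m, C m) ≤ Real.logb 2 (1 + ‖hinner (h k) pc‖ ^ 2 /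
        ((∑ j, ‖hinner (h k) (p j)‖ ^ 2) + σ2))) →
      (⨅ m : Fin M, (C m + ⨅ i : {i : Fin K // μ i = m}, userRate h μ σ2 p i.1))
        * (1 + (M : ℝ) - L) ≤ Real.logb 2 P + D := by
  obtain ⟨c, hc0, hc1, hc⟩ := exists_interference hN hrank
  set B : ℝ := 1 + ∑ k, bpow (h k) with hB
  have hB1 : 1 ≤ B := by
    have : 0 ≤ ∑ k, bpow (h k) := Finset.sum_nonneg fun k _ => bpow_nonneg _
    linarith
  have hhB : ∀ k q, ‖hinner (h k) q‖ ^ 2 ≤ B * bpow q := by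
    intro k q
    refine (hinner_sq_le _ _).trans ?_
    have h1 : bpow (h k) ≤ ∑ k, bpow (h k) :=
      Finset.single_le_sum (f := fun k => bpow (h k)) (fun k _ => bpow_nonneg _)
        (Finset.mem_univ k)
    have := bpow_nonneg q
    gcongr
    linarith
  have hlB : 0 ≤ Real.logb 2 B := Real.logb_nonneg one_lt_two hB1
  have hlc : Real.logb 2 c ≤ 0 := Real.logb_nonpos one_lt_two hc0.le hc1
  -- `c₀` is the constant lost when comparing a group's received signal (at most `B` times its
  -- power, one bit for noise and interference) with an interference of gain at least `c`
  set c₀ : ℝ := 1 + Real.logb 2 B - Real.logb 2 c with hc₀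
  have hc₀1 : 1 ≤ c₀ := by linarith
  set E : ℝ := Real.logb 2 (B + σ2) + c₀ + |Real.logb 2 σ2| with hE
  refine ⟨E + M * c₀, fun P hP C pc p hC hpow hdec => ?_⟩
  have hM0 : Nonempty (Fin M) := ⟨⟨0, hM⟩⟩
  set r := ⨅ m : Fin M, (C m + ⨅ i : {i : Fin K // μ i = m}, userRate h μ σ2 p i.1) with hr
  -- `I k` is the interference power at user `k`, `W k` the total designated power received there
  set I : Fin K → ℝ := fun k => ∑ m ∈ Finset.univ.erase (μ k), ‖hinner (h k) (p m)‖ ^ 2 with hI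
  set W : Fin K → ℝ := fun k => ∑ m, ‖hinner (h k) (p m)‖ ^ 2 with hW
  have hI0 : ∀ k, 0 ≤ I k := fun k => Finset.sum_nonneg fun _ _ => by positivity
  have hW0 : ∀ k, 0 ≤ W k := fun k => Finset.sum_nonneg fun _ _ => by positivity
  have hWI : ∀ k, W k = I k + ‖hinner (h k) (p (μ k))‖ ^ 2 := fun k =>
    (Finset.sum_erase_add _ _ (Finset.mem_univ (μ k))).symm
  have hrate : ∀ k, userRate h μ σ2 p k = Real.logb 2 (W k + σ2) - Real.logb 2 (I k + σ2) := by
    intro k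
    have := hI0 k
    unfold userRate
    rw [logb_one_add_div (by positivity) (by positivity), hWI k]
    congr 2
    simp only [hI]
    ring
  have hle_r : ∀ k, r ≤ C (μ k) + userRate h μ σ2 p k := by
    intro k
    have h1 : r ≤ C (μ k) + ⨅ i : {i : Fin K // μ i = μ k}, userRate h μ σ2 p i.1 :=
      ciInf_le (f := fun m => C m + ⨅ i : {i : Fin K // μ i = m}, userRate h μ σ2 p i.1)
        (Set.finite_range _).bddBelow (μ k)
    have h2 : ⨅ i : {i : Fin K // μ i = μ k}, userRate h μ σ2 p i.1 ≤ userRate h μ σ2 p k :=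
      ciInf_le (f := fun i : {i : Fin K // μ i = μ k} => userRate h μ σ2 p i.1)
        (Set.finite_range _).bddBelow ⟨k, rfl⟩
    linarith
  have hleI : ∀ k v, v ≠ μ k → ‖hinner (h k) (p v)‖ ^ 2 ≤ I k := fun k v hv =>
    Finset.single_le_sum (f := fun m => ‖hinner (h k) (p m)‖ ^ 2)
      (fun _ _ => by positivity) (Finset.mem_erase.2 ⟨hv, Finset.mem_univ _⟩)
  have hWB : ∀ k, W k ≤ B * ∑ m, bpow (p m) := by
    intro k
    rw [Finset.mul_sum]
    exact Finset.sum_le_sum fun m _ => hhB k _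
  have hdecW : ∀ k, (∑ m, C m) ≤ Real.logb 2 (1 + ‖hinner (h k) pc‖ ^ 2 / (W k + σ2)) := hdec
  clear_value I W
  have hIW : ∀ k, Real.logb 2 (I k + σ2) ≤ Real.logb 2 (W k + σ2) := by
    intro k
    have := hI0 k
    have : 0 ≤ ‖hinner (h k) (p (μ k))‖ ^ 2 := by positivity
    exact Real.logb_le_logb_of_le one_lt_two (by positivity) (by rw [hWI k]; linarith)
  have hσI : ∀ k, Real.logb 2 σ2 ≤ Real.logb 2 (I k + σ2) := by
    intro k
    exact Real.logb_le_logb_of_le one_lt_two hσ (by linarith [hI0 k])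
  have hr0 : 0 ≤ r := by
    refine Real.iInf_nonneg fun m => add_nonneg (hC m) (Real.iInf_nonneg fun i => ?_)
    rw [hrate]
    linarith [hIW i.1]
  have hβ : ∀ k, r - C (μ k) ≤ Real.logb 2 (W k + σ2) - Real.logb 2 (I k + σ2) := by
    intro k
    have h2 := hle_r k
    rw [hrate] at h2
    linarith
  have hdec' : ∀ k, (∑ m, C m) + Real.logb 2 (W k + σ2) ≤
      Real.logb 2 P + Real.logb 2 (B + σ2) := by
    intro k
    have h1 := hdecW k
    have hWk := hW0 k
    rw [logb_one_add_div (by positivity) (by positivity)] at h1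
    have h2 := hWB k
    have h3 : ‖hinner (h k) pc‖ ^ 2 + (W k + σ2) ≤ P * (B + σ2) := by
      have := hhB k pc
      nlinarith
    have h4 := Real.logb_le_logb_of_le one_lt_two (by positivity) h3
    rw [Real.logb_mul (by positivity) (by positivity)] at h4
    linarith
  -- a user with designated rate above one bit receives mostly its own signal
  have hstrong : ∀ k, 1 < r - C (μ k) → Real.logb 2 (W k + σ2) ≤
      1 + Real.logb 2 B + Real.logb 2 (bpow (p (μ k)) + σ2) := by
    intro k hk
    have hIk := hI0 k
    have hWk := hW0 k
    have hb := bpow_nonneg (p (μ k))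
    have h1 : Real.logb 2 (2 * (I k + σ2)) < Real.logb 2 (W k + σ2) := by
      rw [Real.logb_mul (by norm_num) (by positivity), Real.logb_self_eq_one one_lt_two]
      linarith [hβ k]
    have h2 := (Real.logb_lt_logb_iff one_lt_two (by positivity) (by positivity)).1 h1
    have h3 := hWI k
    have h4 := hhB k (p (μ k))
    have h5 : W k + σ2 ≤ 2 * (B * (bpow (p (μ k)) + σ2)) := by nlinarith
    have h6 := Real.logb_le_logb_of_le one_lt_two (by positivity) h5
    rw [Real.logb_mul (by norm_num) (by positivity), Real.logb_mul (by positivity) (by positivity),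
      Real.logb_self_eq_one one_lt_two] at h6
    linarith
  have hinterf : ∀ k v, v ≠ μ k → c * bpow (p v) ≤ ‖hinner (h k) (p v)‖ ^ 2 →
      r - C (μ k) + Real.logb 2 c + Real.logb 2 (bpow (p v) + σ2) ≤ Real.logb 2 (W k + σ2) := by
    intro k v hv hle
    have hb := bpow_nonneg (p v)
    have h1 := hleI k v hv
    have h2 : c * (bpow (p v) + σ2) ≤ I k + σ2 := by nlinarith
    have h3 := Real.logb_le_logb_of_le one_lt_two (by positivity) h2
    rw [Real.logb_mul (by positivity) (by positivity)] at h3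
    linarith [hβ k]
  have habs := neg_abs_le (Real.logb 2 σ2)
  have habs' := abs_nonneg (Real.logb 2 σ2)
  have h1 : ∀ m, r - C m + ∑ m, C m ≤ Real.logb 2 P + E := by
    intro m
    obtain ⟨k, rfl⟩ := hsurj m
    have := hβ k
    have := hdec' k
    have := hσI k
    linarith
  obtain ⟨k₀, -⟩ := hsurj hM0.some
  have h0 : ∑ m, C m ≤ Real.logb 2 P + E := by
    have := hdec' k₀
    have := hσI k₀
    have := hIW k₀
    linarith
  refine (converse_count (β := fun m => r - C m) (A := ∑ m, C m) (Q := Real.logb 2 P + E) hL1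
    hr0 (by linarith : 0 ≤ c₀) (fun m => by linarith [hC m]) (by simp) h0 h1 ?_).trans_eq (by ring)
  intro T hT hcard
  have hcardeq : T.card = L + 1 := by
    by_contra hne
    -- the strongest beam of `T` would drown a group of `T` that claims a large rate
    obtain ⟨v, hv, hmax⟩ := T.exists_max_image (fun m => bpow (p m))
      (Finset.card_pos.1 (by omega))
    obtain ⟨m, hm, hNm⟩ := hsel (T.erase v) (by rw [Finset.card_erase_of_mem hv]; omega)
    obtain ⟨k, hk, hle⟩ := hc _ hNm (p v)
    have hkT : μ k ∈ T.erase v := Finset.mem_of_mem_erase (Finset.mem_filter.1 hk).2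
    have hkT' := Finset.mem_of_mem_erase hkT
    have e1 := hinterf k v (Finset.ne_of_mem_erase hkT).symm hle
    have e2 := hT _ hkT'
    have e3 := hstrong k (by linarith)
    have e4 : Real.logb 2 (bpow (p (μ k)) + σ2) ≤ Real.logb 2 (bpow (p v) + σ2) :=
      Real.logb_le_logb_of_le one_lt_two (by linarith [bpow_nonneg (p (μ k))])
        (by linarith [hmax _ hkT'])
    linarith
  refine ⟨hcardeq, ?_⟩
  obtain ⟨m, hm, hNm⟩ := hsel T hcard
  obtain ⟨k, hk, hle⟩ := hc _ hNm (p m)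
  have hkT := (Finset.mem_filter.1 hk).2
  have hne := (Finset.ne_of_mem_erase hkT).symm
  refine ⟨m, hm, μ k, Finset.mem_of_mem_erase hkT, hne, ?_⟩
  have e1 := hinterf k m hne hle
  have e2 := hT m hm
  obtain ⟨k', rfl⟩ := hsurj m
  have e3 := hstrong k' (by linarith)
  have e4 := hβ k'
  have e5 := hσI k'
  have e6 := hdec' k
  linarith

/-! ### Achievability -/

lemma norm_sqrt_sq {x : ℝ} (hx : 0 ≤ x) : ‖((Real.sqrt x : ℝ) : ℂ)‖ ^ 2 = x := by
  rw [Complex.norm_real, Real.norm_eq_abs, sq_abs, Real.sq_sqrt hx]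

lemma exists_pos_le {ι : Type*} [Finite ι] [Nonempty ι] (f : ι → ℝ) (hf : ∀ i, 0 < f i) :
    ∃ g, 0 < g ∧ ∀ i, g ≤ f i := by
  obtain ⟨i, hi⟩ := Finite.exists_min f
  exact ⟨f i, hf i, hi⟩

lemma userRate_nonneg {N K M : ℕ} (h : Fin K → Fin N → ℂ) (μ : Fin K → Fin M)
    {σ2 : ℝ} (hσ : 0 < σ2) (p : Fin M → Fin N → ℂ) (k : Fin K) : 0 ≤ userRate h μ σ2 p k := by
  refine Real.logb_nonneg one_lt_two ?_
  have : 0 ≤ ∑ m ∈ Finset.univ.erase (μ k), ‖hinner (h k) (p m)‖ ^ 2 :=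
    Finset.sum_nonneg fun _ _ => by positivity
  rw [le_add_iff_nonneg_right]
  positivity

set_option maxHeartbeats 1000000 in
/-- With `a = 1 / (1 + M - L)`, the `L` smallest groups are zero-forced against each other with
designated power of order `P ^ a`, while the remaining groups share the degraded stream, whose
SINR is of order `P ^ (1 - a)`. Every group then gets `a log₂ P - O(1)`. -/
lemma achievable {N K M L : ℕ} (hM : 1 ≤ M) (hN : 1 ≤ N)
    (h : Fin K → Fin N → ℂ) (μ : Fin K → Fin M) (hsurj : Function.Surjective μ)
    (hrank : GenericRank h)
    (hord : ∀ m m' : ℕ, m ≤ m' → m' < M → Gsize μ m ≤ Gsize μ m')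
    (σ2 : ℝ) (hσ : 0 < σ2) (hLM : L ≤ M) (hle : NL μ L ≤ N) :
    ∃ D : ℝ, ∀ P : ℝ, 1 ≤ P → ∃ (C : Fin M → ℝ) (pc : Fin N → ℂ) (p : Fin M → Fin N → ℂ),
      (∀ m, 0 ≤ C m) ∧ bpow pc + (∑ m, bpow (p m)) ≤ P ∧
      (∀ k : Fin K, (∑ m, C m) ≤ Real.logb 2 (1 + ‖hinner (h k) pc‖ ^ 2 /
        ((∑ j, ‖hinner (h k) (p j)‖ ^ 2) + σ2))) ∧
      1 / (1 + (M : ℝ) - L) * Real.logb 2 P - D ≤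
        (⨅ m : Fin M, (C m + ⨅ i : {i : Fin K // μ i = m}, userRate h μ σ2 p i.1)) := by
  have hM0 : Nonempty (Fin M) := ⟨⟨0, hM⟩⟩
  have hK0 : Nonempty (Fin K) := ⟨(hsurj hM0.some).choose⟩
  have hLM' : (L : ℝ) ≤ M := by exact_mod_cast hLM
  set a : ℝ := 1 / (1 + (M : ℝ) - L) with ha
  have haM : a * (1 + (M : ℝ) - L) = 1 := by
    rw [ha]; exact one_div_mul_cancel (by linarith)
  have ha0 : 0 < a := by rw [ha]; apply one_div_pos.2; linarith
  have ha1 : a ≤ 1 := by nlinarith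
  have hq : ∀ m : Fin M, ∃ q : Fin N → ℂ, ((m : ℕ) < L →
      (∀ k, (μ k : ℕ) < L → μ k ≠ m → hinner (h k) q = 0) ∧
      ∀ k, μ k = m → hinner (h k) q ≠ 0) ∧ (¬ (m : ℕ) < L → q = 0) := by
    intro m
    by_cases hm : (m : ℕ) < L
    · obtain ⟨q, h1, h2⟩ := exists_zero_forcing hrank (card_others μ hord hle hLM m hm)
      exact ⟨q, fun _ => ⟨fun k hk hk' => h1 k (by simp [hk, hk']),
        fun k hk => h2 k (by simp [hk])⟩, fun hn => absurd hm hn⟩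
    · exact ⟨0, fun hm' => absurd hm' hm, fun _ => rfl⟩
  choose q hq1 hq0 using hq
  obtain ⟨qc, -, hqc⟩ := exists_zero_forcing hrank (Z := ∅) (by simpa using hN)
  obtain ⟨g, hg, hgle⟩ := exists_pos_le (fun k => min (‖hinner (h k) qc‖ ^ 2)
    (if (μ k : ℕ) < L then ‖hinner (h k) (q (μ k))‖ ^ 2 else 1)) (by
      intro k
      refine lt_min (pow_pos (norm_pos_iff.2 (hqc k (by simp))) 2) ?_
      split_ifs with hk
      · exact pow_pos (norm_pos_iff.2 ((hq1 _ hk).2 k rfl)) 2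
      · exact one_pos)
  have hgc : ∀ k, g ≤ ‖hinner (h k) qc‖ ^ 2 := fun k => (hgle k).trans (min_le_left _ _)
  have hgd : ∀ k, (μ k : ℕ) < L → g ≤ ‖hinner (h k) (q (μ k))‖ ^ 2 := fun k hk =>
    ((hgle k).trans (min_le_right _ _)).trans_eq (if_pos hk)
  have hsq : 0 ≤ bpow qc + ∑ m, bpow (q m) :=
    add_nonneg (bpow_nonneg _) (Finset.sum_nonneg fun m _ => bpow_nonneg _)
  -- `ε` normalises the fixed directions so that the total power is at most `P`
  set ε : ℝ := 1 / (1 + (bpow qc + ∑ m, bpow (q m))) with hε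
  have hε0 : 0 < ε := by positivity
  have hε1 : ε * (bpow qc + ∑ m, bpow (q m)) ≤ 1 := by
    rw [hε, one_div_mul_eq_div, div_le_one (by positivity)]; linarith
  set B : ℝ := ∑ k, ∑ j, ‖hinner (h k) (q j)‖ ^ 2 with hB
  have hB0 : 0 ≤ B := Finset.sum_nonneg fun _ _ => Finset.sum_nonneg fun _ _ => by positivity
  have hBk : ∀ k, ∑ j, ‖hinner (h k) (q j)‖ ^ 2 ≤ B := fun k =>
    Finset.single_le_sum (f := fun k => ∑ j, ‖hinner (h k) (q j)‖ ^ 2)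
      (fun _ _ => Finset.sum_nonneg fun _ _ => by positivity) (Finset.mem_univ k)
  clear_value ε B a
  set D : ℝ := |Real.logb 2 (ε * g / (ε * B + σ2))| + |Real.logb 2 (ε * g / σ2)| with hD
  have hD1 : -D ≤ Real.logb 2 (ε * g / (ε * B + σ2)) := by
    linarith [neg_abs_le (Real.logb 2 (ε * g / (ε * B + σ2))),
      abs_nonneg (Real.logb 2 (ε * g / σ2))]
  have hD2 : -D ≤ Real.logb 2 (ε * g / σ2) := by
    linarith [neg_abs_le (Real.logb 2 (ε * g / σ2)),
      abs_nonneg (Real.logb 2 (ε * g / (ε * B + σ2)))]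
  have hD0 : 0 ≤ D := by positivity
  clear_value D
  refine ⟨D, fun P hP => ?_⟩
  have hP0 : 0 < P := by linarith
  have hlP : 0 ≤ Real.logb 2 P := Real.logb_nonneg one_lt_two hP
  obtain ⟨ρ, hρ⟩ : ∃ ρ, ρ = P ^ a := ⟨_, rfl⟩
  have hρ0 : 0 < ρ := by rw [hρ]; positivity
  have hρ1 : 1 ≤ ρ := by rw [hρ]; exact Real.one_le_rpow hP ha0.le
  have hρP : ρ ≤ P := by
    rw [hρ]; exact (Real.rpow_le_rpow_of_exponent_le hP ha1).trans_eq (Real.rpow_one P)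
  have hlρ : Real.logb 2 ρ = a * Real.logb 2 P := by
    rw [hρ, Real.logb_rpow_eq_mul_logb_of_pos hP0]
  set p : Fin M → Fin N → ℂ := fun m => ((Real.sqrt (ε * ρ) : ℝ) : ℂ) • q m with hp
  have hpq : ∀ k m, ‖hinner (h k) (p m)‖ ^ 2 = ε * ρ * ‖hinner (h k) (q m)‖ ^ 2 := by
    intro k m
    rw [hp, hinner_smul, norm_mul, mul_pow, norm_sqrt_sq (by positivity)]
  have hbp : ∀ m, bpow (p m) = ε * ρ * bpow (q m) := by
    intro m
    rw [hp, bpow_smul, norm_sqrt_sq (by positivity)]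
  clear_value p
  have hnn : ∀ k, 0 ≤ ∑ j, ‖hinner (h k) (p j)‖ ^ 2 := fun k =>
    Finset.sum_nonneg fun _ _ => by positivity
  refine ⟨fun m => if (m : ℕ) < L then 0 else max 0 (a * Real.logb 2 P - D),
    ((Real.sqrt (ε * P) : ℝ) : ℂ) • qc, p, ?_, ?_, ?_, ?_⟩
  · intro m
    dsimp only
    split_ifs
    · exact le_rfl
    · exact le_max_left _ _
  · rw [bpow_smul, norm_sqrt_sq (by positivity), Finset.sum_congr rfl fun m _ => hbp m,
      ← Finset.mul_sum]
    have hs : 0 ≤ ∑ m, bpow (q m) := Finset.sum_nonneg fun m _ => bpow_nonneg _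
    calc ε * P * bpow qc + ε * ρ * ∑ m, bpow (q m)
        ≤ ε * P * bpow qc + ε * P * ∑ m, bpow (q m) := by gcongr
      _ = P * (ε * (bpow qc + ∑ m, bpow (q m))) := by ring
      _ ≤ P * 1 := by gcongr
      _ = P := mul_one P
  · intro k
    have hnk := hnn k
    rw [hinner_smul, norm_mul, mul_pow, norm_sqrt_sq (by positivity)]
    have hpos : 0 ≤ Real.logb 2 (1 + ε * P * ‖hinner (h k) qc‖ ^ 2 /
        ((∑ j, ‖hinner (h k) (p j)‖ ^ 2) + σ2)) := by
      refine Real.logb_nonneg one_lt_two ?_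
      rw [le_add_iff_nonneg_right]
      positivity
    have hlow : Real.logb 2 P - a * Real.logb 2 P - D ≤
        Real.logb 2 (1 + ε * P * ‖hinner (h k) qc‖ ^ 2 /
        ((∑ j, ‖hinner (h k) (p j)‖ ^ 2) + σ2)) := by
      have h1 : (∑ j, ‖hinner (h k) (p j)‖ ^ 2) + σ2 ≤ ρ * (ε * B + σ2) := by
        rw [Finset.sum_congr rfl fun m _ => hpq k m, ← Finset.mul_sum]
        have h2 : ε * ρ * ∑ j, ‖hinner (h k) (q j)‖ ^ 2 ≤ ε * ρ * B := by
          have := hBk k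
          gcongr
        nlinarith
      have h2 : P / ρ * (ε * g / (ε * B + σ2)) ≤ 1 + ε * P * ‖hinner (h k) qc‖ ^ 2 /
          ((∑ j, ‖hinner (h k) (p j)‖ ^ 2) + σ2) := by
        calc P / ρ * (ε * g / (ε * B + σ2)) = ε * P * g / (ρ * (ε * B + σ2)) := by
              field_simp
          _ ≤ ε * P * ‖hinner (h k) qc‖ ^ 2 / ((∑ j, ‖hinner (h k) (p j)‖ ^ 2) + σ2) := by
              have := hgc k
              gcongr
          _ ≤ _ := by linarith
      have h3 := Real.logb_le_logb_of_le one_lt_two (by positivity) h2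
      rw [Real.logb_mul (by positivity) (by positivity), Real.logb_div hP0.ne' hρ0.ne',
        hlρ] at h3
      linarith
    have hsumC : (∑ m : Fin M, if (m : ℕ) < L then 0 else max 0 (a * Real.logb 2 P - D)) =
        ((M - L : ℕ) : ℝ) * max 0 (a * Real.logb 2 P - D) := by
      rw [Fin.sum_univ_eq_sum_range
        (fun m => if m < L then (0 : ℝ) else max 0 (a * Real.logb 2 P - D)) M,
        ← Finset.sum_range_add_sum_Ico _ hLM,
        Finset.sum_eq_zero fun m hm => if_pos (Finset.mem_range.1 hm),
        Finset.sum_congr rfl fun m hm => if_neg (not_lt.2 (Finset.mem_Ico.1 hm).1)]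
      simp
    rw [hsumC]
    rcases le_total (a * Real.logb 2 P - D) 0 with h0 | h0
    · rwa [max_eq_left h0, mul_zero]
    · rw [max_eq_right h0]
      rcases hLM.eq_or_lt with rfl | hlt
      · simpa using hpos
      · refine le_trans ?_ hlow
        have h1 : (1 : ℝ) ≤ ((M - L : ℕ) : ℝ) := by exact_mod_cast (by omega : 1 ≤ M - L)
        have h2 : ((M - L : ℕ) : ℝ) * a = 1 - a := by
          rw [Nat.cast_sub hLM]; linarith
        nlinarith
  · refine le_ciInf fun m => ?_
    obtain ⟨k₀, hk₀⟩ := hsurj m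
    have hne : Nonempty {i : Fin K // μ i = m} := ⟨⟨k₀, hk₀⟩⟩
    dsimp only
    by_cases hm : (m : ℕ) < L
    · rw [if_pos hm, zero_add]
      refine le_ciInf fun i => ?_
      obtain ⟨k, rfl⟩ := i
      have hz : ∑ m ∈ Finset.univ.erase (μ k), ‖hinner (h k) (p m)‖ ^ 2 = 0 := by
        refine Finset.sum_eq_zero fun j hj => ?_
        have hj' := Finset.ne_of_mem_erase hj
        rw [hpq]
        by_cases hjL : (j : ℕ) < L
        · rw [(hq1 j hjL).1 k hm hj'.symm]; simp
        · rw [hq0 j hjL, hinner_zero]; simp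
      have h1 : ρ * (ε * g / σ2) ≤ 1 + ε * ρ * ‖hinner (h k) (q (μ k))‖ ^ 2 / σ2 := by
        calc ρ * (ε * g / σ2) = ε * ρ * g / σ2 := by ring
          _ ≤ ε * ρ * ‖hinner (h k) (q (μ k))‖ ^ 2 / σ2 := by
              have := hgd k hm
              gcongr
          _ ≤ _ := by linarith
      have h2 := Real.logb_le_logb_of_le one_lt_two (by positivity) h1
      rw [Real.logb_mul (by positivity) (by positivity), hlρ] at h2
      simp only [userRate]
      rw [hz, zero_add, hpq]
      linarith
    · rw [if_neg hm]
      have := le_max_right 0 (a * Real.logb 2 P - D)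
      have : 0 ≤ ⨅ i : {i : Fin K // μ i = m}, userRate h μ σ2 p i.1 :=
        Real.iInf_nonneg fun i => userRate_nonneg h μ hσ p i.1
      linarith

/-! ### The limit -/


/-- **Proposition 3 (MMF-DoF of rate-splitting beamforming).** With `M ≥ 1` (nonempty)
groups of nondecreasing sizes, `N ≥ 1` antennas, noise variance `σ² > 0`, generic
channels, and `M_D* := M` if `N ≥ N_M` and otherwise the unique `L ∈ {1,…,M−1}` with
`N_L ≤ N < N_{L+1}`, one has `ℛ_RS(P)/log₂ P → 1/(1 + M − M_D*)` as `P → ∞`. -/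
theorem stmt2 {N K M : ℕ} (hM : 1 ≤ M) (hN : 1 ≤ N)
    (h : Fin K → Fin N → ℂ) (μ : Fin K → Fin M) (hsurj : Function.Surjective μ)
    (hrank : GenericRank h)
    (hord : ∀ m m' : ℕ, m ≤ m' → m' < M → Gsize μ m ≤ Gsize μ m')
    (σ2 : ℝ) (hσ : 0 < σ2)
    (MD : ℕ)
    (hMD : (NL μ M ≤ N ∧ MD = M) ∨
      (1 ≤ MD ∧ MD + 1 ≤ M ∧ NL μ MD ≤ N ∧ N < NL μ (MD + 1))) :
    Filter.Tendsto (fun P : ℝ => MMFRS h μ σ2 P / Real.logb 2 P)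
      Filter.atTop (nhds (1 / (1 + (M : ℝ) - (MD : ℝ)))) := by
  obtain ⟨hL1, hLM, hle, hsel⟩ : 1 ≤ MD ∧ MD ≤ M ∧ NL μ MD ≤ N ∧
      ∀ T : Finset (Fin M), MD + 1 ≤ T.card →
        ∃ m ∈ T, N ≤ (Finset.univ.filter fun k => μ k ∈ T.erase m).card := by
    rcases hMD with ⟨h1, rfl⟩ | ⟨h1, h2, h3, h4⟩
    · refine ⟨hM, le_rfl, h1, fun T hT => ?_⟩
      have := T.card_le_univ
      rw [Fintype.card_fin] at this
      omega
    · exact ⟨h1, by omega, h3, exists_erase_users μ hord h4⟩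
  obtain ⟨D, hD⟩ := converse_bound hM hN h μ hsurj hrank σ2 hσ hL1 hsel
  obtain ⟨D', hD'⟩ := achievable hM hN h μ hsurj hrank hord σ2 hσ hLM hle
  have hLM' : (MD : ℝ) ≤ M := by exact_mod_cast hLM
  have hden : 0 < 1 + (M : ℝ) - MD := by linarith
  obtain ⟨a, ha⟩ : ∃ a : ℝ, a = 1 / (1 + (M : ℝ) - MD) := ⟨_, rfl⟩
  rw [← ha] at hD' ⊢
  have hup : ∀ P : ℝ, 1 ≤ P → ∀ r ∈ { r : ℝ | ∃ (C : Fin M → ℝ) (pc : Fin N → ℂ)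
      (p : Fin M → Fin N → ℂ), (∀ m, 0 ≤ C m) ∧
      bpow pc + (∑ m, bpow (p m)) ≤ P ∧
      (∀ k : Fin K, (∑ m, C m) ≤ Real.logb 2 (1 + ‖hinner (h k) pc‖ ^ 2 /
        ((∑ j, ‖hinner (h k) (p j)‖ ^ 2) + σ2))) ∧
      r = ⨅ m : Fin M, (C m + ⨅ i : {i : Fin K // μ i = m}, userRate h μ σ2 p i.1) },
      r ≤ a * Real.logb 2 P + a * D := by
    rintro P hP r ⟨C, pc, p, h1, h2, h3, rfl⟩
    have := (le_div_iff₀ hden).2 (hD P hP C pc p h1 h2 h3)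
    refine this.trans_eq ?_
    rw [ha]
    ring
  have hU : ∀ P : ℝ, 1 ≤ P → MMFRS h μ σ2 P ≤ a * Real.logb 2 P + a * D := by
    intro P hP
    obtain ⟨C, pc, p, h1, h2, h3, -⟩ := hD' P hP
    exact csSup_le ⟨_, C, pc, p, h1, h2, h3, rfl⟩ (hup P hP)
  have hLo : ∀ P : ℝ, 1 ≤ P → a * Real.logb 2 P - D' ≤ MMFRS h μ σ2 P := by
    intro P hP
    obtain ⟨C, pc, p, h1, h2, h3, h4⟩ := hD' P hP
    exact h4.trans (le_csSup ⟨_, hup P hP⟩ ⟨C, pc, p, h1, h2, h3, rfl⟩)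
  have hlog : Filter.Tendsto (fun P : ℝ => Real.logb 2 P) Filter.atTop Filter.atTop :=
    Real.tendsto_logb_atTop one_lt_two
  have hlim : ∀ d : ℝ, Filter.Tendsto (fun P : ℝ => a + d / Real.logb 2 P) Filter.atTop
      (nhds a) := fun d => by
    simpa using (tendsto_const_nhds (x := a)).add (hlog.const_div_atTop d)
  refine tendsto_of_tendsto_of_tendsto_of_le_of_le' (hlim (-D')) (hlim (a * D)) ?_ ?_
  · filter_upwards [Filter.eventually_gt_atTop 1] with P hP
    have hl : 0 < Real.logb 2 P := Real.logb_pos one_lt_two hP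
    rw [le_div_iff₀ hl, add_mul, div_mul_cancel₀ _ hl.ne']
    linarith [hLo P hP.le]
  · filter_upwards [Filter.eventually_gt_atTop 1] with P hP
    have hl : 0 < Real.logb 2 P := Real.logb_pos one_lt_two hP
    rw [div_le_iff₀ hl, add_mul, div_mul_cancel₀ _ hl.ne']
    linarith [hU P hP.le]
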